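/- Let G = P₁ × P₂ × Z_n, where P₁ is a non-trivial non-cyclic p₁-group, P₂ is a non-trivial non-cyclic p₂-group, p₁ and p₂ are distinct primes, n ≥ 2, and neither p₁ nor p₂ divides n. Then the domination number of the difference graph D(G) is at least 3. -/

import Mathlib

/-- Adjacency in the difference of the enhanced power graph and the power graph:
`⟨x, y⟩` is cyclic but neither of `x`, `y` is a power of the other. -/
def diffAdj {G : Type*} [Group G] (x y : G) : Prop :=
  IsCyclic (Subgroup.closure ({x, y} : Set G)) ∧
    (¬ ∃ k : ℤ, y = x ^ k) ∧ (¬ ∃ k : ℤ, x = y ^ k)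

/-- The vertex set of the difference graph `𝒟(G)`: the elements of `G` that are
non-isolated in the difference of the enhanced power graph and the power graph. -/
abbrev DiffVertex (G : Type*) [Group G] := {x : G // ∃ y, diffAdj x y}

/-- The difference graph `𝒟(G)` of a group `G`. -/
def diffGraph (G : Type*) [Group G] : SimpleGraph (DiffVertex G) :=
  SimpleGraph.fromRel (fun a b => diffAdj a.val b.val)

/-- A dominating set of a graph: every vertex is in `S` or adjacent to a vertex of `S`. -/
def IsDominatingSet {V : Type*} (Γ : SimpleGraph V) (S : Set V) : Prop :=
  ∀ v : V, v ∈ S ∨ ∃ u ∈ S, Γ.Adj u v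

/-- The domination number of a graph: the least size of a dominating set. -/
noncomputable def dominationNumber {V : Type*} (Γ : SimpleGraph V) : ℕ :=
  sInf {n : ℕ | ∃ S : Set V, IsDominatingSet Γ S ∧ S.ncard = n}

/-- A maximal cyclic subgroup: a cyclic subgroup not properly contained in
another cyclic subgroup. -/
def IsMaxCyclic {G : Type*} [Group G] (C : Subgroup G) : Prop :=
  IsCyclic C ∧ ∀ D : Subgroup G, IsCyclic D → C ≤ D → C = D

theorem aux_cyc {G : Type*} [Group G] (x y : G) :
    IsCyclic (Subgroup.closure ({x, y} : Set G)) ↔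
      ∃ g, x ∈ Subgroup.zpowers g ∧ y ∈ Subgroup.zpowers g := by
  constructor
  · intro h
    obtain ⟨g, hg⟩ := (Subgroup.isCyclic_iff_exists_zpowers_eq_top _).1 h
    refine ⟨g, ?_, ?_⟩ <;> rw [hg] <;> apply Subgroup.subset_closure <;> simp
  · rintro ⟨g, hx, hy⟩
    have hle : Subgroup.closure ({x, y} : Set G) ≤ Subgroup.zpowers g := by
      rw [Subgroup.closure_le]
      rintro w (rfl | rfl)
      · exact hx
      · exact hy
    exact isCyclic_of_injective (Subgroup.inclusion hle) (Subgroup.inclusion_injective hle)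

/-- joint cyclicity -/
def Cp {G : Type*} [Group G] (x y : G) : Prop :=
  ∃ g, x ∈ Subgroup.zpowers g ∧ y ∈ Subgroup.zpowers g

theorem Cp.symm {G : Type*} [Group G] {x y : G} (h : Cp x y) : Cp y x := by
  obtain ⟨g, h1, h2⟩ := h
  exact ⟨g, h2, h1⟩

theorem diffAdj_iff' {G : Type*} [Group G] (x y : G) :
    diffAdj x y ↔ Cp x y ∧ y ∉ Subgroup.zpowers x ∧ x ∉ Subgroup.zpowers y := by
  unfold diffAdj
  rw [aux_cyc]
  simp only [Subgroup.mem_zpowers_iff, Cp, eq_comm]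

theorem diffAdj_symm' {G : Type*} [Group G] {x y : G} (h : diffAdj x y) : diffAdj y x := by
  rw [diffAdj_iff'] at *
  exact ⟨h.1.symm, h.2.2, h.2.1⟩

theorem aux_union {G : Type*} [Group G] (hc : ¬ IsCyclic G) (a b : G) :
    ∃ x, x ∉ Subgroup.zpowers a ∧ x ∉ Subgroup.zpowers b := by
  have key : ∀ a : G, ∃ x, x ∉ Subgroup.zpowers a := by
    intro a
    by_contra h
    push Not at h
    exact hc ⟨a, h⟩
  obtain ⟨g, hg⟩ := key a
  obtain ⟨h, hh⟩ := key b
  by_cases h1 : g ∈ Subgroup.zpowers b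
  · by_cases h2 : h ∈ Subgroup.zpowers a
    · refine ⟨g * h, ?_, ?_⟩
      · rwa [Subgroup.mul_mem_cancel_right _ h2]
      · rwa [Subgroup.mul_mem_cancel_left _ h1]
    · exact ⟨h, h2, hh⟩
  · exact ⟨g, hg, h1⟩

theorem aux_pcomp {G : Type*} [Group G] [Finite G] {p : ℕ} (hp : p.Prime) (hG : IsPGroup p G)
    (x y : G) (h : Cp x y) : x ∈ Subgroup.zpowers y ∨ y ∈ Subgroup.zpowers x := by
  have : Fact p.Prime := ⟨hp⟩
  obtain ⟨g, hx, hy⟩ := h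
  have key : ∀ u ∈ Subgroup.zpowers g, ∃ i, Subgroup.zpowers u = Subgroup.zpowers (g ^ (p ^ i)) := by
    intro u hu
    rw [← mem_powers_iff_mem_zpowers] at hu
    obtain ⟨k, rfl⟩ := hu
    obtain ⟨m, hm⟩ := (IsPGroup.iff_orderOf.1 hG) g
    have h1 : (Nat.gcd k (orderOf g)) ∣ p ^ m := hm ▸ Nat.gcd_dvd_right _ _
    obtain ⟨i, -, hi⟩ := (Nat.dvd_prime_pow hp).1 h1
    refine ⟨i, ?_⟩
    rw [← hi]
    apply le_antisymm
    · rw [Subgroup.zpowers_le]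
      obtain ⟨c, hc⟩ := Nat.gcd_dvd_left k (orderOf g)
      refine ⟨c, ?_⟩
      simp only [zpow_natCast]
      rw [← pow_mul, ← hc]
    · rw [Subgroup.zpowers_le]
      refine ⟨Nat.gcdA k (orderOf g), ?_⟩
      have := Nat.gcd_eq_gcd_ab k (orderOf g)
      simp only
      rw [← zpow_natCast g k, ← zpow_mul, ← zpow_natCast g (Nat.gcd _ _), this, zpow_add,
        zpow_mul g (orderOf g : ℤ)]
      simp
  obtain ⟨i, hi⟩ := key x hx
  obtain ⟨j, hj⟩ := key y hy
  rw [← Subgroup.zpowers_le (g := x), ← Subgroup.zpowers_le (g := y), hi, hj]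
  have aux : ∀ i j, i ≤ j → Subgroup.zpowers (g ^ (p ^ j)) ≤ Subgroup.zpowers (g ^ (p ^ i)) := by
    intro i j hij
    rw [Subgroup.zpowers_le]
    obtain ⟨c, hc⟩ := pow_dvd_pow p hij
    rw [hc, pow_mul]
    exact Subgroup.pow_mem _ (Subgroup.mem_zpowers _) _
  rcases le_total i j with h | h
  · exact Or.inr (aux _ _ h)
  · exact Or.inl (aux _ _ h)

theorem aux_prod {A B : Type*} [Group A] [Group B] [Finite A] [Finite B] (g u : A) (h v : B)
    (hc : (orderOf g).Coprime (orderOf h)) (hu : u ∈ Subgroup.zpowers g)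
    (hv : v ∈ Subgroup.zpowers h) : (u, v) ∈ Subgroup.zpowers (g, h) := by
  rw [← mem_powers_iff_mem_zpowers] at hu hv
  obtain ⟨k, rfl⟩ := hu
  obtain ⟨l, rfl⟩ := hv
  obtain ⟨m, h1, h2⟩ := Nat.chineseRemainder hc k l
  refine ⟨m, ?_⟩
  simp only [zpow_natCast, Prod.pow_mk]
  rw [pow_eq_pow_iff_modEq.2 h1, pow_eq_pow_iff_modEq.2 h2]

section
variable {A B C : Type*} [Group A] [Group B] [Group C]

theorem mem3 {g u : A × B × C} (h : u ∈ Subgroup.zpowers g) :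
    u.1 ∈ Subgroup.zpowers g.1 ∧ u.2.1 ∈ Subgroup.zpowers g.2.1 ∧
      u.2.2 ∈ Subgroup.zpowers g.2.2 := by
  obtain ⟨k, rfl⟩ := h
  exact ⟨⟨k, rfl⟩, ⟨k, rfl⟩, ⟨k, rfl⟩⟩

theorem Cp3 {g u : A × B × C} (h : Cp g u) :
    Cp g.1 u.1 ∧ Cp g.2.1 u.2.1 ∧ Cp g.2.2 u.2.2 := by
  obtain ⟨w, h1, h2⟩ := h
  exact ⟨⟨_, (mem3 h1).1, (mem3 h2).1⟩, ⟨_, (mem3 h1).2.1, (mem3 h2).2.1⟩,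
    ⟨_, (mem3 h1).2.2, (mem3 h2).2.2⟩⟩

theorem ne_one_of_notMem {G : Type*} [Group G] {x y : G} (h : x ∉ Subgroup.zpowers y) : x ≠ 1 := by
  rintro rfl
  exact h (one_mem _)

theorem aux_half
    (hprod : ∀ g u : A × B × C, u.1 ∈ Subgroup.zpowers g.1 → u.2.1 ∈ Subgroup.zpowers g.2.1 →
      u.2.2 ∈ Subgroup.zpowers g.2.2 → u ∈ Subgroup.zpowers g)
    (a b : A × B × C) (x : A) (y : B)
    (hxa : x ∉ Subgroup.zpowers a.1) (hxb : x ∉ Subgroup.zpowers b.1)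
    (hya : y ∉ Subgroup.zpowers a.2.1) (hyb : y ∉ Subgroup.zpowers b.2.1)
    (A1 : a.1 ∈ Subgroup.zpowers x) (A2 : a.2.1 ∈ Subgroup.zpowers y)
    (hdom : ∀ v : A × B × C, (∃ w, diffAdj v w) → v = a ∨ v = b ∨ diffAdj a v ∨ diffAdj b v) :
    Cp b.1 x ∧ Cp b.2.1 y ∧ Cp b.1 a.1 ∧ Cp b.2.1 a.2.1 ∧ b ∉ Subgroup.zpowers a := by
  have hx1 := ne_one_of_notMem hxa
  have hy1 := ne_one_of_notMem hya
  have sx := Subgroup.mem_zpowers x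
  have sy := Subgroup.mem_zpowers y
  have s2 := Subgroup.mem_zpowers a.2.1
  have s3 := Subgroup.mem_zpowers a.2.2
  have s1 := Subgroup.mem_zpowers a.1
  have e1 : diffAdj b (x, a.2.1, a.2.2) := by
    have hw : diffAdj ((x, a.2.1, a.2.2) : A × B × C) (1, y, 1) := by
      rw [diffAdj_iff']
      refine ⟨⟨(x, y, a.2.2), hprod _ _ sx A2 s3, hprod _ _ (one_mem _) sy (one_mem _)⟩, ?_, ?_⟩
      · exact fun h => hya (mem3 h).2.1
      · exact fun h => hx1 (by simpa using (mem3 h).1)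
    rcases hdom _ ⟨_, hw⟩ with h | h | h | h
    · exact absurd (h ▸ s1 : (x, a.2.1, a.2.2).1 ∈ _) hxa
    · exact absurd (h ▸ Subgroup.mem_zpowers b.1 : (x, a.2.1, a.2.2).1 ∈ _) hxb
    · rw [diffAdj_iff'] at h
      exact absurd (hprod (x, a.2.1, a.2.2) a A1 s2 s3) h.2.2
    · exact h
  have e2 : diffAdj b (a.1, y, a.2.2) := by
    have hw : diffAdj ((a.1, y, a.2.2) : A × B × C) (x, 1, 1) := by
      rw [diffAdj_iff']
      refine ⟨⟨(x, y, a.2.2), hprod _ _ A1 sy s3, hprod _ _ sx (one_mem _) (one_mem _)⟩, ?_, ?_⟩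
      · exact fun h => hxa (mem3 h).1
      · exact fun h => hy1 (by simpa using (mem3 h).2.1)
    rcases hdom _ ⟨_, hw⟩ with h | h | h | h
    · exact absurd (h ▸ s2 : (a.1, y, a.2.2).2.1 ∈ _) hya
    · exact absurd (h ▸ Subgroup.mem_zpowers b.2.1 : (a.1, y, a.2.2).2.1 ∈ _) hyb
    · rw [diffAdj_iff'] at h
      exact absurd (hprod (a.1, y, a.2.2) a s1 A2 s3) h.2.2
    · exact h
  rw [diffAdj_iff'] at e1 e2
  refine ⟨(Cp3 e1.1).1, (Cp3 e2.1).2.1, (Cp3 e2.1).1, (Cp3 e1.1).2.1, fun h => e1.2.2 ?_⟩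
  exact (Subgroup.zpowers_le.2 (hprod (x, a.2.1, a.2.2) a A1 s2 s3)) h

theorem aux_caseI
    (hprod : ∀ g u : A × B × C, u.1 ∈ Subgroup.zpowers g.1 → u.2.1 ∈ Subgroup.zpowers g.2.1 →
      u.2.2 ∈ Subgroup.zpowers g.2.2 → u ∈ Subgroup.zpowers g)
    (hA : ∀ x y : A, Cp x y → x ∈ Subgroup.zpowers y ∨ y ∈ Subgroup.zpowers x)
    (hB : ∀ x y : B, Cp x y → x ∈ Subgroup.zpowers y ∨ y ∈ Subgroup.zpowers x)
    (z : C) (hz : ∀ c, c ∈ Subgroup.zpowers z) (hz1 : z ≠ 1)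
    (a b : A × B × C) (x : A) (y : B)
    (hxa : x ∉ Subgroup.zpowers a.1) (hxb : x ∉ Subgroup.zpowers b.1)
    (hya : y ∉ Subgroup.zpowers a.2.1) (hyb : y ∉ Subgroup.zpowers b.2.1)
    (A1 : Cp a.1 x) (A2 : Cp a.2.1 y)
    (hdom : ∀ v : A × B × C, (∃ w, diffAdj v w) → v = a ∨ v = b ∨ diffAdj a v ∨ diffAdj b v) :
    False := by
  have A1' := (hA _ _ A1).resolve_right hxa
  have A2' := (hB _ _ A2).resolve_right hya
  obtain ⟨B1, B2, c1, c2, n1⟩ := aux_half hprod a b x y hxa hxb hya hyb A1' A2' hdom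
  have B1' := (hA _ _ B1).resolve_right hxb
  have B2' := (hB _ _ B2).resolve_right hyb
  obtain ⟨-, -, -, -, n2⟩ := aux_half hprod b a x y hxb hxa hyb hya B1' B2'
    (fun v hv => by rcases hdom v hv with h | h | h | h <;> simp [h])
  obtain ⟨j1, h1a, h1b, h1x, h1n⟩ : ∃ j, a.1 ∈ Subgroup.zpowers j ∧ b.1 ∈ Subgroup.zpowers j ∧
      j ∈ Subgroup.zpowers x ∧ x ∉ Subgroup.zpowers j := by
    rcases hA _ _ c1 with h | h
    · exact ⟨a.1, Subgroup.mem_zpowers _, h, A1', hxa⟩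
    · exact ⟨b.1, h, Subgroup.mem_zpowers _, B1', hxb⟩
  obtain ⟨j2, h2a, h2b⟩ : ∃ j, a.2.1 ∈ Subgroup.zpowers j ∧ b.2.1 ∈ Subgroup.zpowers j := by
    rcases hB _ _ c2 with h | h
    · exact ⟨a.2.1, Subgroup.mem_zpowers _, h⟩
    · exact ⟨b.2.1, h, Subgroup.mem_zpowers _⟩
  have ja : a ∈ Subgroup.zpowers (j1, j2, z) := hprod _ _ h1a h2a (hz _)
  have jb : b ∈ Subgroup.zpowers (j1, j2, z) := hprod _ _ h1b h2b (hz _)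
  have hw : diffAdj ((j1, j2, z) : A × B × C) (x, 1, 1) := by
    rw [diffAdj_iff']
    refine ⟨⟨(x, j2, z), hprod _ _ h1x (Subgroup.mem_zpowers _) (hz _),
      hprod _ _ (Subgroup.mem_zpowers _) (one_mem _) (one_mem _)⟩, ?_, ?_⟩
    · exact fun h => h1n (mem3 h).1
    · exact fun h => hz1 (by simpa using (mem3 h).2.2)
  rcases hdom _ ⟨_, hw⟩ with h | h | h | h
  · exact n1 (h ▸ jb)
  · exact n2 (h ▸ ja)
  · rw [diffAdj_iff'] at h
    exact h.2.2 ja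
  · rw [diffAdj_iff'] at h
    exact h.2.2 jb

theorem aux_main
    (hprod : ∀ g u : A × B × C, u.1 ∈ Subgroup.zpowers g.1 → u.2.1 ∈ Subgroup.zpowers g.2.1 →
      u.2.2 ∈ Subgroup.zpowers g.2.2 → u ∈ Subgroup.zpowers g)
    (hA : ∀ x y : A, Cp x y → x ∈ Subgroup.zpowers y ∨ y ∈ Subgroup.zpowers x)
    (hB : ∀ x y : B, Cp x y → x ∈ Subgroup.zpowers y ∨ y ∈ Subgroup.zpowers x)
    (hcA : ¬ IsCyclic A) (hcB : ¬ IsCyclic B)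
    (z : C) (hz : ∀ c, c ∈ Subgroup.zpowers z) (hz1 : z ≠ 1)
    (a b : A × B × C)
    (hdom : ∀ v : A × B × C, (∃ w, diffAdj v w) → v = a ∨ v = b ∨ diffAdj a v ∨ diffAdj b v) :
    False := by
  obtain ⟨x, hxa, hxb⟩ := aux_union hcA a.1 b.1
  obtain ⟨y, hya, hyb⟩ := aux_union hcB a.2.1 b.2.1
  have hx1 := ne_one_of_notMem hxa
  have hy1 := ne_one_of_notMem hya
  have sx := Subgroup.mem_zpowers x
  have sy := Subgroup.mem_zpowers y
  have hdom' : ∀ v : A × B × C, (∃ w, diffAdj v w) →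
      v = b ∨ v = a ∨ diffAdj b v ∨ diffAdj a v :=
    fun v hv => by rcases hdom v hv with h | h | h | h <;> simp [h]
  have t3 : (Cp a.1 x ∧ Cp a.2.1 y) ∨ (Cp b.1 x ∧ Cp b.2.1 y) := by
    have hw : diffAdj ((x, y, 1) : A × B × C) (1, 1, z) := by
      rw [diffAdj_iff']
      refine ⟨⟨(x, y, z), hprod _ _ sx sy (one_mem _),
        hprod _ _ (one_mem _) (one_mem _) (hz _)⟩, ?_, ?_⟩
      · exact fun h => hz1 (by simpa using (mem3 h).2.2)
      · exact fun h => hx1 (by simpa using (mem3 h).1)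
    rcases hdom _ ⟨_, hw⟩ with h | h | h | h
    · exact absurd (h ▸ Subgroup.mem_zpowers a.1 : ((x, y, 1) : A × B × C).1 ∈ _) hxa
    · exact absurd (h ▸ Subgroup.mem_zpowers b.1 : ((x, y, 1) : A × B × C).1 ∈ _) hxb
    · have := Cp3 ((diffAdj_iff' _ _).1 h).1
      exact Or.inl ⟨this.1, this.2.1⟩
    · have := Cp3 ((diffAdj_iff' _ _).1 h).1
      exact Or.inr ⟨this.1, this.2.1⟩
  rcases t3 with ⟨h1, h2⟩ | ⟨h1, h2⟩
  · exact aux_caseI hprod hA hB z hz hz1 a b x y hxa hxb hya hyb h1 h2 hdom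
  · exact aux_caseI hprod hA hB z hz hz1 b a x y hxb hxa hyb hya h1 h2 hdom'

end

/-- Lemma 5.12: if `G = P₁ × P₂ × ℤ_n`, where `P₁, P₂` are non-trivial non-cyclic
`p₁`- and `p₂`-groups for distinct primes `p₁, p₂`, `n ≥ 2`, and `p₁ ∤ n`, `p₂ ∤ n`,
then `γ(𝒟(G)) ≥ 3`. -/
theorem domination_number_ge_three
    (p₁ p₂ n : ℕ) (hp₁ : p₁.Prime) (hp₂ : p₂.Prime) (hne : p₁ ≠ p₂)
    (hn : 2 ≤ n) (hd₁ : ¬ p₁ ∣ n) (hd₂ : ¬ p₂ ∣ n)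
    (P₁ P₂ : Type*) [Group P₁] [Group P₂] [Finite P₁] [Finite P₂]
    [Nontrivial P₁] [Nontrivial P₂]
    (hP₁ : IsPGroup p₁ P₁) (hP₂ : IsPGroup p₂ P₂)
    (hc₁ : ¬ IsCyclic P₁) (hc₂ : ¬ IsCyclic P₂) :
    3 ≤ dominationNumber (diffGraph (P₁ × P₂ × Multiplicative (ZMod n))) := by
  have : NeZero n := ⟨by omega⟩
  have : Fact p₁.Prime := ⟨hp₁⟩
  have : Fact p₂.Prime := ⟨hp₂⟩
  have hprod : ∀ g u : P₁ × P₂ × Multiplicative (ZMod n), u.1 ∈ Subgroup.zpowers g.1 →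
      u.2.1 ∈ Subgroup.zpowers g.2.1 →
      u.2.2 ∈ Subgroup.zpowers g.2.2 → u ∈ Subgroup.zpowers g := by
    rintro ⟨g1, g2, g3⟩ ⟨u1, u2, u3⟩ h1 h2 h3
    obtain ⟨k, hk⟩ := (IsPGroup.iff_orderOf.1 hP₁) g1
    obtain ⟨l, hl⟩ := (IsPGroup.iff_orderOf.1 hP₂) g2
    have h3n : orderOf g3 ∣ n := by
      have := orderOf_dvd_natCard g3
      simpa using this
    have c12 : (orderOf g1).Coprime (orderOf g2) := by
      rw [hk, hl]
      exact Nat.Coprime.pow _ _ ((Nat.coprime_primes hp₁ hp₂).2 hne)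
    have c13 : (orderOf g1).Coprime (orderOf g3) := by
      rw [hk]
      exact Nat.Coprime.coprime_dvd_right h3n
        (Nat.Coprime.pow_left _ ((Nat.Prime.coprime_iff_not_dvd hp₁).2 hd₁))
    have c23 : (orderOf g2).Coprime (orderOf g3) := by
      rw [hl]
      exact Nat.Coprime.coprime_dvd_right h3n
        (Nat.Coprime.pow_left _ ((Nat.Prime.coprime_iff_not_dvd hp₂).2 hd₂))
    refine aux_prod _ _ _ _ ?_ h1 (aux_prod _ _ _ _ c23 h2 h3)
    rw [Prod.orderOf_mk]
    exact Nat.Coprime.coprime_dvd_right (Nat.lcm_dvd_mul _ _) (Nat.Coprime.mul_right c12 c13)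
  have : Nontrivial (Multiplicative (ZMod n)) := by
    have : Fact (1 < n) := ⟨by omega⟩
    infer_instance
  obtain ⟨z, hz⟩ := IsCyclic.exists_generator (α := Multiplicative (ZMod n))
  have hz1 : z ≠ 1 := by
    rintro rfl
    obtain ⟨c, hc⟩ := exists_ne (1 : Multiplicative (ZMod n))
    exact hc (by simpa using hz c)
  have main := aux_main hprod (aux_pcomp hp₁ hP₁) (aux_pcomp hp₂ hP₂) hc₁ hc₂ z hz hz1
  unfold dominationNumber
  refine le_csInf ⟨_, Set.univ, fun v => Or.inl trivial, rfl⟩ ?_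
  rintro m ⟨S, hS, rfl⟩
  by_contra hlt
  have hlt' : S.ncard = 0 ∨ S.ncard = 1 ∨ S.ncard = 2 := by omega
  obtain ⟨a, b, hab⟩ : ∃ a b : P₁ × P₂ × Multiplicative (ZMod n),
      ∀ s ∈ S, s.1 = a ∨ s.1 = b := by
    rcases hlt' with h | h | h
    · rw [Set.ncard_eq_zero (Set.toFinite S)] at h
      exact ⟨1, 1, by simp [h]⟩
    · obtain ⟨a, rfl⟩ := Set.ncard_eq_one.1 h
      refine ⟨a.1, a.1, ?_⟩
      rintro s rfl
      exact Or.inl rfl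
    · obtain ⟨a, b, -, rfl⟩ := Set.ncard_eq_two.1 h
      refine ⟨a.1, b.1, ?_⟩
      rintro s (rfl | rfl)
      · exact Or.inl rfl
      · exact Or.inr rfl
  refine main a b fun v hv => ?_
  rcases hS ⟨v, hv⟩ with h | ⟨u, hu, h⟩
  · rcases hab _ h with h | h
    · exact Or.inl h
    · exact Or.inr (Or.inl h)
  · have h' : diffAdj u.1 v := by
      rcases ((SimpleGraph.fromRel_adj _ _ _).1 h).2 with h | h
      · exact h
      · exact diffAdj_symm' h
    rcases hab u hu with e | e
    · exact Or.inr (Or.inr (Or.inl (e ▸ h')))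
    · exact Or.inr (Or.inr (Or.inr (e ▸ h')))
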